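/- arXiv:math/0701228 — 2 statements merged into one kernel-verified Lean document; each statement's English description precedes it below -/
import Mathlib

section
/- Let a = (4/π)·𝒦(1/√2)² and b = a/2. For every K > 1, max{ exp(π(K−1)), exp(b(K − 1/K)) } < λ(K) < min{ exp(a(K−1)), exp((π + b/K)(K−1)) }. -/
open Set Filter

/-- Complete elliptic integral of the first kind. -/
noncomputable def ellK (r : ℝ) : ℝ :=
  ∫ θ in (0:ℝ)..(Real.pi / 2), (1 - r ^ 2 * Real.sin θ ^ 2) ^ (-(1/2) : ℝ)

/-- The Grötzsch modulus μ(r) = (π/2)·𝒦'(r)/𝒦(r). -/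
noncomputable def mu (r : ℝ) : ℝ :=
  Real.pi / 2 * ellK (Real.sqrt (1 - r ^ 2)) / ellK r

/-!
Write `x = r²`, `t = log (x / (1 - x))` and `K = 𝒦(r) / 𝒦'(r)`, so that `λ(K) = eᵗ` and `K = 1` at
`t = 0`. Legendre's relation gives `dK/dt = π / (4 𝒦'(r)²)`. Each of the four bounds compares `t`
with a function of `K` that also vanishes at `t = 0`, so it is enough to compare derivatives in `t`,
and this leaves inequalities between complete elliptic integrals: monotonicity of `𝒦` and of
`√(1 - x) 𝒦`, and concavity of `𝒦⁻²` in `x`, which is the reverse Minkowski inequality for the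
exponent `-1/2`.
-/

section

open Real Topology MeasureTheory
open scoped Interval

section Calculus

variable {a b : ℝ}

lemma hasDerivAt_intervalIntegral_of_continuousOn {F F' : ℝ → ℝ → ℝ} {U : Set ℝ} {x : ℝ}
    (hU : U ∈ 𝓝 x) (hF : ∀ y ∈ U, Continuous (F y))
    (hF' : ContinuousOn F'.uncurry (U ×ˢ univ))
    (hderiv : ∀ y ∈ U, ∀ θ, HasDerivAt (F · θ) (F' y θ) y) :
    HasDerivAt (fun y ↦ ∫ θ in a..b, F y θ) (∫ θ in a..b, F' x θ) x := by
  obtain ⟨V, hV, hVU, hVc⟩ := local_compact_nhds hU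
  obtain ⟨C, hC⟩ := (hVc.prod isCompact_uIcc).exists_bound_of_continuousOn
    (hF'.mono (prod_mono hVU (subset_univ [[a, b]])))
  have hF'x : Continuous (F' x) :=
    hF'.comp_continuous (.prodMk_right x) fun θ ↦ ⟨mem_of_mem_nhds hU, mem_univ θ⟩
  refine (intervalIntegral.hasDerivAt_integral_of_dominated_loc_of_deriv_le (bound := fun _ ↦ C)
    hV ?_ ((hF x (mem_of_mem_nhds hU)).intervalIntegrable a b) hF'x.aestronglyMeasurable ?_
    intervalIntegrable_const ?_).2
  · filter_upwards [hU] with y hy using (hF y hy).aestronglyMeasurable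
  · exact .of_forall fun θ hθ y hy ↦ hC (y, θ) ⟨hy, uIoc_subset_uIcc hθ⟩
  · exact .of_forall fun θ _ y hy ↦ hderiv y (hVU hy) θ

lemma lt_of_hasDerivAt_lt {f g f' g' : ℝ → ℝ} (hf : ∀ x, HasDerivAt f (f' x) x)
    (hg : ∀ x, HasDerivAt g (g' x) x) (hlt : ∀ x, a < x → f' x < g' x) (heq : f a = g a)
    (hab : a < b) : f b < g b := by
  have hderiv (x : ℝ) : HasDerivAt (g - f) (g' x - f' x) x := (hg x).sub (hf x)
  have hmono : StrictMonoOn (g - f) (Ici a) := by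
    refine strictMonoOn_of_hasDerivWithinAt_pos (convex_Ici a)
      (fun x _ ↦ (hderiv x).continuousAt.continuousWithinAt)
      (fun x _ ↦ (hderiv x).hasDerivWithinAt) fun x hx ↦ sub_pos.2 (hlt x ?_)
    rwa [interior_Ici] at hx
  have := hmono self_mem_Ici hab.le hab
  simpa [heq] using this

end Calculus

section ReverseHolder

variable {p : ℝ}

lemma rpow_add_mul_sub_lt_rpow_of_neg (hp : p < 0) {u v : ℝ} (hu : 0 < u) (hv : 0 < v)
    (hne : u ≠ v) : v ^ p + p * (v ^ (p - 1) * u - v ^ p) < u ^ p := by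
  have hne' : u / v ≠ 1 := by rwa [ne_eq, div_eq_one_iff_eq hv.ne']
  have hbernoulli : 1 + p * (u / v - 1) < (u / v) ^ p := calc
    1 + p * (u / v - 1) < p * log (u / v) + 1 := by
      linarith [mul_lt_mul_of_neg_left (log_lt_sub_one_of_pos (div_pos hu hv) hne') hp]
    _ ≤ exp (p * log (u / v)) := add_one_le_exp _
    _ = (u / v) ^ p := by rw [rpow_def_of_pos (div_pos hu hv), mul_comm]
  rw [div_rpow hu.le hv.le, lt_div_iff₀ (rpow_pos_of_pos hv p)] at hbernoulli
  rw [rpow_sub_one hv.ne']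
  calc
    _ = (1 + p * (u / v - 1)) * v ^ p := by ring
    _ < u ^ p := hbernoulli

lemma rpow_add_mul_sub_le_rpow_of_neg (hp : p < 0) {u v : ℝ} (hu : 0 < u) (hv : 0 < v) :
    v ^ p + p * (v ^ (p - 1) * u - v ^ p) ≤ u ^ p := by
  rcases eq_or_ne u v with rfl | hne
  · simp [rpow_sub_one hv.ne', hv.ne']
  · exact (rpow_add_mul_sub_lt_rpow_of_neg hp hu hv hne).le

variable {f g : ℝ → ℝ} {a b : ℝ}

lemma integral_rpow_pos (hab : a < b) (hf : Continuous f) (hf₀ : ∀ θ, 0 < f θ) :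
    0 < ∫ θ in a..b, f θ ^ p :=
  intervalIntegral.intervalIntegral_pos_of_pos
    ((hf.rpow_const fun θ ↦ .inl (hf₀ θ).ne').intervalIntegrable a b)
    (fun θ ↦ rpow_pos_of_pos (hf₀ θ) p) hab

lemma integral_rpow_lt_integral_rpow_sub_one_mul (hp : p < 0) (hab : a < b)
    (hf : Continuous f) (hg : Continuous g) (hf₀ : ∀ θ, 0 < f θ) (hg₀ : ∀ θ, 0 < g θ)
    (heq : ∫ θ in a..b, f θ ^ p = ∫ θ in a..b, g θ ^ p) (hne : ∃ θ ∈ Icc a b, f θ ≠ g θ) :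
    ∫ θ in a..b, g θ ^ p < ∫ θ in a..b, g θ ^ (p - 1) * f θ := by
  have hfp : Continuous fun θ ↦ f θ ^ p := hf.rpow_const fun θ ↦ .inl (hf₀ θ).ne'
  have hgp : Continuous fun θ ↦ g θ ^ p := hg.rpow_const fun θ ↦ .inl (hg₀ θ).ne'
  have hgf : Continuous fun θ ↦ g θ ^ (p - 1) * f θ :=
    (hg.rpow_const fun θ ↦ .inl (hg₀ θ).ne').mul hf
  have hdiff : Continuous fun θ ↦ p * (g θ ^ (p - 1) * f θ - g θ ^ p) :=
    (hgf.sub hgp).const_mul p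
  have htangent : ∫ θ in a..b, (g θ ^ p + p * (g θ ^ (p - 1) * f θ - g θ ^ p)) <
      ∫ θ in a..b, f θ ^ p := by
    obtain ⟨θ₀, hθ₀, hne⟩ := hne
    exact intervalIntegral.integral_lt_integral_of_continuousOn_of_le_of_exists_lt hab
      (hgp.add hdiff).continuousOn hfp.continuousOn
      (fun θ _ ↦ rpow_add_mul_sub_le_rpow_of_neg hp (hf₀ θ) (hg₀ θ))
      ⟨θ₀, hθ₀, rpow_add_mul_sub_lt_rpow_of_neg hp (hf₀ θ₀) (hg₀ θ₀) hne⟩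
  rw [intervalIntegral.integral_add (hgp.intervalIntegrable a b)
    (hdiff.intervalIntegrable a b), intervalIntegral.integral_const_mul,
    intervalIntegral.integral_sub (hgf.intervalIntegrable a b) (hgp.intervalIntegrable a b),
    heq, add_lt_iff_neg_left] at htangent
  exact sub_pos.1 (pos_of_mul_neg_right htangent hp.le)

-- Reverse Hölder inequality: the functional `f ↦ (∫ fᵖ) ^ p⁻¹` lies below its tangent at `g`.
lemma integral_rpow_rpow_inv_mul_lt (hp : p < 0) (hab : a < b)
    (hf : Continuous f) (hg : Continuous g) (hf₀ : ∀ θ, 0 < f θ) (hg₀ : ∀ θ, 0 < g θ)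
    (hne : ∀ c, ∃ θ ∈ Icc a b, f θ ≠ c * g θ) :
    (∫ θ in a..b, f θ ^ p) ^ p⁻¹ * (∫ θ in a..b, g θ ^ p) <
      (∫ θ in a..b, g θ ^ p) ^ p⁻¹ * ∫ θ in a..b, g θ ^ (p - 1) * f θ := by
  have hA : 0 < ∫ θ in a..b, f θ ^ p := integral_rpow_pos hab hf hf₀
  have hB : 0 < ∫ θ in a..b, g θ ^ p := integral_rpow_pos hab hg hg₀
  set A := ∫ θ in a..b, f θ ^ p
  set B := ∫ θ in a..b, g θ ^ p
  have hc : 0 < (A / B) ^ p⁻¹ := rpow_pos_of_pos (div_pos hA hB) _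
  have hcp : ((A / B) ^ p⁻¹) ^ p = A / B := rpow_inv_rpow (div_pos hA hB).le hp.ne
  set c := (A / B) ^ p⁻¹ with hc_def
  have hscale (q : ℝ) (θ : ℝ) : (c * g θ) ^ q = c ^ q * g θ ^ q := mul_rpow hc.le (hg₀ θ).le
  have hnormal : ∫ θ in a..b, f θ ^ p = ∫ θ in a..b, (c * g θ) ^ p := by
    simp only [hscale, intervalIntegral.integral_const_mul, hcp]
    exact (div_mul_cancel₀ A hB.ne').symm
  have hlt := integral_rpow_lt_integral_rpow_sub_one_mul hp hab hf (hg.const_mul c) hf₀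
    (fun θ ↦ mul_pos hc (hg₀ θ)) hnormal (hne c)
  simp only [hscale, mul_assoc, intervalIntegral.integral_const_mul, rpow_sub_one hc.ne'] at hlt
  rw [div_mul_eq_mul_div, mul_div_assoc, mul_lt_mul_iff_right₀ (rpow_pos_of_pos hc p),
    lt_div_iff₀ hc, hc_def, div_rpow hA.le hB.le, mul_div_assoc', div_lt_iff₀ (by positivity)]
    at hlt
  linarith

end ReverseHolder

/-- The integral `∫₀^{π/2} (1 - x sin² θ)ᵖ dθ`, which contains the complete elliptic integrals in
the parameter `x = r²`: the first kind is `p = -1/2`, the second kind `p = 1/2`. -/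
noncomputable def ellipticIntegral (p x : ℝ) : ℝ :=
  ∫ θ in 0..(π / 2), (1 - x * sin θ ^ 2) ^ p

local notation "𝒦" => ellipticIntegral (-(1 / 2))
local notation "ℰ" => ellipticIntegral (1 / 2)

namespace ellipticIntegral

variable {p x y : ℝ}

lemma one_sub_mul_sin_sq_pos (hx : x < 1) (θ : ℝ) : 0 < 1 - x * sin θ ^ 2 := by
  nlinarith [sin_sq_add_cos_sq θ, mul_nonneg (sub_nonneg.2 hx.le) (sq_nonneg (sin θ)),
    sq_nonneg (cos θ), sin_sq_le_one θ]

lemma continuous_integrand (p : ℝ) (hx : x < 1) :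
    Continuous fun θ ↦ (1 - x * sin θ ^ 2) ^ p :=
  Continuous.rpow_const (by fun_prop) fun θ ↦ .inl (one_sub_mul_sin_sq_pos hx θ).ne'

lemma intervalIntegrable_integrand (p : ℝ) (hx : x < 1) (a b : ℝ) :
    IntervalIntegrable (fun θ ↦ (1 - x * sin θ ^ 2) ^ p) volume a b :=
  (continuous_integrand p hx).intervalIntegrable a b

lemma pos (p : ℝ) (hx : x < 1) : 0 < ellipticIntegral p x :=
  integral_rpow_pos (by positivity) (by fun_prop) (one_sub_mul_sin_sq_pos hx)

lemma apply_zero (p : ℝ) : ellipticIntegral p 0 = π / 2 := by simp [ellipticIntegral]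

lemma half_apply_one : ℰ 1 = 1 := by
  have hcos : EqOn (fun θ ↦ (1 - 1 * sin θ ^ 2) ^ (1 / 2 : ℝ)) cos [[0, π / 2]] := by
    intro θ hθ
    rw [uIcc_of_le (by positivity)] at hθ
    have : 0 ≤ cos θ := cos_nonneg_of_mem_Icc ⟨by linarith [hθ.1, pi_pos], hθ.2⟩
    simp only [one_mul, ← cos_sq', ← sqrt_eq_rpow, sqrt_sq this]
  rw [ellipticIntegral, intervalIntegral.integral_congr hcos]
  simp

lemma continuous (hp : 0 ≤ p) : Continuous (ellipticIntegral p) := by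
  refine intervalIntegral.continuous_parametric_intervalIntegral_of_continuous' ?_ 0 (π / 2)
  exact Continuous.rpow_const (by fun_prop) fun _ ↦ .inr hp

lemma strictMonoOn_of_neg (hp : p < 0) : StrictMonoOn (ellipticIntegral p) (Iio 1) := by
  intro x hx y hy hxy
  refine intervalIntegral.integral_lt_integral_of_continuousOn_of_le_of_exists_lt (by positivity)
    (continuous_integrand p hx).continuousOn (continuous_integrand p hy).continuousOn
    (fun θ _ ↦ ?_) ⟨π / 2, right_mem_Icc.2 (by positivity), ?_⟩
  · exact rpow_le_rpow_of_nonpos (one_sub_mul_sin_sq_pos hy θ) (by gcongr) hp.le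
  · have hy' : 0 < 1 - y := sub_pos.2 hy
    simpa using rpow_lt_rpow_of_neg hy' (by linarith) hp

lemma one_sub_rpow_neg_mul_eq_integral (p : ℝ) (hx : x < 1) :
    (1 - x) ^ (-p) * ellipticIntegral p x =
      ∫ θ in 0..(π / 2), ((1 - x * sin θ ^ 2) / (1 - x)) ^ p := by
  have hx' : 0 ≤ 1 - x := by linarith
  rw [ellipticIntegral, ← intervalIntegral.integral_const_mul]
  congr with θ
  rw [div_rpow (one_sub_mul_sin_sq_pos hx θ).le hx', rpow_neg hx', div_eq_inv_mul]

lemma strictAntiOn_one_sub_rpow_neg_mul (hp : p < 0) :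
    StrictAntiOn (fun x ↦ (1 - x) ^ (-p) * ellipticIntegral p x) (Iio 1) := by
  have hcont {z : ℝ} (hz : z < 1) : Continuous fun θ ↦ ((1 - z * sin θ ^ 2) / (1 - z)) ^ p :=
    Continuous.rpow_const (by fun_prop) fun θ ↦
      .inl (div_pos (one_sub_mul_sin_sq_pos hz θ) (sub_pos.2 hz)).ne'
  intro x hx y hy hxy
  have hx' : 0 < 1 - x := sub_pos.2 hx
  have hy' : 0 < 1 - y := sub_pos.2 hy
  simp only [one_sub_rpow_neg_mul_eq_integral p hx, one_sub_rpow_neg_mul_eq_integral p hy]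
  refine intervalIntegral.integral_lt_integral_of_continuousOn_of_le_of_exists_lt (by positivity)
    (hcont hy).continuousOn (hcont hx).continuousOn
    (fun θ _ ↦ ?_) ⟨0, left_mem_Icc.2 (by positivity), ?_⟩
  · refine rpow_le_rpow_of_nonpos (div_pos (one_sub_mul_sin_sq_pos hx θ) hx') ?_ hp.le
    rw [div_le_div_iff₀ hx' hy']
    nlinarith [mul_nonneg (sub_nonneg.2 hxy.le) (sub_nonneg.2 (sin_sq_le_one θ))]
  · refine rpow_lt_rpow_of_neg (by simpa using hx') ?_ hp
    simpa using inv_strictAnti₀ hy' (by linarith)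

-- Reverse Minkowski: the functional `f ↦ (∫ fᵖ) ^ p⁻¹` is concave and the base is affine in `x`.
lemma strictConcaveOn_rpow_inv (hp : p < 0) :
    StrictConcaveOn ℝ (Iio 1) fun x ↦ ellipticIntegral p x ^ p⁻¹ := by
  refine ⟨convex_Iio 1, fun x hx y hy hxy α β hα hβ hαβ ↦ ?_⟩
  set m := α • x + β • y with hm
  have hm₁ : m < 1 := convex_Iio (1 : ℝ) hx hy hα.le hβ.le hαβ
  set J : ℝ → ℝ := fun z ↦ ∫ θ in 0..(π / 2), (1 - m * sin θ ^ 2) ^ (p - 1) * (1 - z * sin θ ^ 2)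
  have htangent {z : ℝ} (hz : z < 1) (hzm : z ≠ m) :
      ellipticIntegral p z ^ p⁻¹ * ellipticIntegral p m < ellipticIntegral p m ^ p⁻¹ * J z := by
    refine integral_rpow_rpow_inv_mul_lt hp (by positivity) (by fun_prop) (by fun_prop)
      (one_sub_mul_sin_sq_pos hz) (one_sub_mul_sin_sq_pos hm₁) fun c ↦ ?_
    rcases eq_or_ne c 1 with rfl | hc
    · exact ⟨π / 2, right_mem_Icc.2 (by positivity), by simpa using hzm⟩
    · exact ⟨0, left_mem_Icc.2 (by positivity), by simpa using hc.symm⟩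
  have hJ : α * J x + β * J y = ellipticIntegral p m := by
    have hint (z : ℝ) : IntervalIntegrable
        (fun θ ↦ (1 - m * sin θ ^ 2) ^ (p - 1) * (1 - z * sin θ ^ 2)) volume 0 (π / 2) :=
      ((continuous_integrand (p - 1) hm₁).mul (by fun_prop)).intervalIntegrable _ _
    simp only [J, ellipticIntegral, ← intervalIntegral.integral_const_mul]
    rw [← intervalIntegral.integral_add ((hint x).const_mul α) ((hint y).const_mul β)]
    congr with θ
    have hD := one_sub_mul_sin_sq_pos hm₁ θ
    have hpow : (1 - m * sin θ ^ 2) ^ p = (1 - m * sin θ ^ 2) ^ (p - 1) * (1 - m * sin θ ^ 2) := by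
      rw [rpow_sub_one hD.ne', div_mul_cancel₀ _ hD.ne']
    have hmean : m = α * x + β * y := hm
    linear_combination (1 - m * sin θ ^ 2) ^ (p - 1) * (hαβ + sin θ ^ 2 * hmean) - hpow
  have hmem : m ∈ openSegment ℝ x y := ⟨α, β, hα, hβ, hαβ, rfl⟩
  have hxm : x ≠ m := fun h ↦ hxy (left_mem_openSegment_iff.1 (h.symm ▸ hmem))
  have hym : y ≠ m := fun h ↦ hxy (right_mem_openSegment_iff.1 (h.symm ▸ hmem))
  refine lt_of_mul_lt_mul_right ?_ (pos p hm₁).le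
  calc
    _ = α * (ellipticIntegral p x ^ p⁻¹ * ellipticIntegral p m) +
        β * (ellipticIntegral p y ^ p⁻¹ * ellipticIntegral p m) := by
      simp only [smul_eq_mul]; ring
    _ < α * (ellipticIntegral p m ^ p⁻¹ * J x) + β * (ellipticIntegral p m ^ p⁻¹ * J y) := by
      exact add_lt_add (mul_lt_mul_of_pos_left (htangent hx hxm) hα)
        (mul_lt_mul_of_pos_left (htangent hy hym) hβ)
    _ = ellipticIntegral p m ^ p⁻¹ * ellipticIntegral p m := by rw [← hJ]; ring

lemma hasDerivAt (p : ℝ) (hx : x < 1) :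
    HasDerivAt (ellipticIntegral p)
      (∫ θ in 0..(π / 2), -p * (sin θ ^ 2 * (1 - x * sin θ ^ 2) ^ (p - 1))) x := by
  refine hasDerivAt_intervalIntegral_of_continuousOn
    (F' := fun x θ ↦ -p * (sin θ ^ 2 * (1 - x * sin θ ^ 2) ^ (p - 1))) (Iio_mem_nhds hx)
    (fun y hy ↦ continuous_integrand p hy) ?_ fun y hy θ ↦ ?_
  · have hbase : ContinuousOn (fun z : ℝ × ℝ ↦ (1 - z.1 * sin z.2 ^ 2) ^ (p - 1))
        (Iio 1 ×ˢ univ) :=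
      ContinuousOn.rpow_const (by fun_prop) fun z hz ↦ .inl (one_sub_mul_sin_sq_pos hz.1 z.2).ne'
    exact (ContinuousOn.mul (by fun_prop) hbase).const_mul (-p)
  · have hbase : HasDerivAt (fun y ↦ 1 - y * sin θ ^ 2) (-sin θ ^ 2) y := by
      simpa using ((hasDerivAt_id y).mul_const (sin θ ^ 2)).const_sub 1
    refine (hbase.rpow_const (p := p) (.inl (one_sub_mul_sin_sq_pos hy θ).ne')).congr_deriv ?_
    ring

lemma hasDerivAt_of_ne_zero (p : ℝ) (hx : x < 1) (hx₀ : x ≠ 0) :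
    HasDerivAt (ellipticIntegral p)
      (p * (ellipticIntegral p x - ellipticIntegral (p - 1) x) / x) x := by
  refine (hasDerivAt p hx).congr_deriv ?_
  rw [eq_div_iff hx₀, ellipticIntegral, ellipticIntegral, ← intervalIntegral.integral_sub
    (intervalIntegrable_integrand p hx _ _) (intervalIntegrable_integrand (p - 1) hx _ _),
    ← intervalIntegral.integral_const_mul, ← intervalIntegral.integral_mul_const]
  congr with θ
  have hD := (one_sub_mul_sin_sq_pos hx θ).ne'
  set D := 1 - x * sin θ ^ 2 with hD_def
  rw [rpow_sub_one hD]
  field_simp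
  rw [hD_def]
  ring

-- The integrand of the left-hand side is `x` times the derivative of
-- `sin θ * cos θ * (1 - x * sin θ ^ 2) ^ p`.
lemma three_term_recurrence (p : ℝ) (hx : x < 1) :
    2 * (p + 1) * ellipticIntegral (p + 1) x - (2 * p + 1) * (2 - x) * ellipticIntegral p x +
      2 * p * (1 - x) * ellipticIntegral (p - 1) x = 0 := by
  have hint (q : ℝ) := intervalIntegrable_integrand q hx 0 (π / 2)
  have hderiv (θ : ℝ) : HasDerivAt (fun θ ↦ x * (sin θ * cos θ * (1 - x * sin θ ^ 2) ^ p))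
      (2 * (p + 1) * (1 - x * sin θ ^ 2) ^ (p + 1) -
        (2 * p + 1) * (2 - x) * (1 - x * sin θ ^ 2) ^ p +
        2 * p * (1 - x) * (1 - x * sin θ ^ 2) ^ (p - 1)) θ := by
    have hD := (one_sub_mul_sin_sq_pos hx θ).ne'
    have hbase := (((hasDerivAt_sin θ).pow 2).const_mul x).const_sub 1
    refine ((((hasDerivAt_sin θ).mul (hasDerivAt_cos θ)).mul
      (hbase.rpow_const (p := p) (.inl hD))).const_mul x).congr_deriv ?_
    have hpow : (1 - x * sin θ ^ 2) ^ p = (1 - x * sin θ ^ 2) ^ (p - 1) * (1 - x * sin θ ^ 2) := by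
      rw [rpow_sub_one hD, div_mul_cancel₀ _ hD]
    simp only [Pi.mul_apply, Pi.pow_apply, rpow_add_one hD, hpow]
    linear_combination (norm := (push_cast; ring))
      (1 - x * sin θ ^ 2) ^ (p - 1) * (x - (2 * p + 1) * x ^ 2 * sin θ ^ 2) * cos_sq' θ
  have hftc := intervalIntegral.integral_eq_sub_of_hasDerivAt (a := 0) (b := π / 2)
    (fun θ _ ↦ hderiv θ) ((((hint _).const_mul _).sub ((hint _).const_mul _)).add
      ((hint _).const_mul _))
  rw [intervalIntegral.integral_add (((hint _).const_mul _).sub ((hint _).const_mul _))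
    ((hint _).const_mul _), intervalIntegral.integral_sub ((hint _).const_mul _)
    ((hint _).const_mul _)] at hftc
  simpa [ellipticIntegral] using hftc

lemma hasDerivAt_firstKind (hx : x < 1) (hx₀ : x ≠ 0) :
    HasDerivAt 𝒦 ((ℰ x - (1 - x) * 𝒦 x) / (2 * x * (1 - x))) x := by
  have hrec := three_term_recurrence (-(1 / 2)) hx
  rw [show (-(1 / 2) + 1 : ℝ) = 1 / 2 by norm_num] at hrec
  have hx₁ : 1 - x ≠ 0 := by linarith
  refine (hasDerivAt_of_ne_zero _ hx hx₀).congr_deriv ?_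
  rw [div_eq_div_iff hx₀ (mul_ne_zero (mul_ne_zero two_ne_zero hx₀) hx₁)]
  linear_combination -x * hrec

lemma hasDerivAt_secondKind (hx : x < 1) (hx₀ : x ≠ 0) :
    HasDerivAt ℰ ((ℰ x - 𝒦 x) / (2 * x)) x := by
  refine (hasDerivAt_of_ne_zero _ hx hx₀).congr_deriv ?_
  rw [show (1 / 2 - 1 : ℝ) = -(1 / 2) by norm_num]
  ring

lemma le_of_exponent_le {q : ℝ} (hpq : p ≤ q) (hx₀ : 0 ≤ x) (hx : x < 1) :
    ellipticIntegral q x ≤ ellipticIntegral p x := by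
  refine intervalIntegral.integral_mono_on (by positivity) (intervalIntegrable_integrand q hx _ _)
    (intervalIntegrable_integrand p hx _ _) fun θ _ ↦ ?_
  refine rpow_le_rpow_of_exponent_ge (one_sub_mul_sin_sq_pos hx θ) ?_ hpq
  linarith [mul_nonneg hx₀ (sq_nonneg (sin θ))]

lemma one_sub_mul_le_add_one (p : ℝ) (hx₀ : 0 ≤ x) (hx : x < 1) :
    (1 - x) * ellipticIntegral p x ≤ ellipticIntegral (p + 1) x := by
  rw [ellipticIntegral, ← intervalIntegral.integral_const_mul]
  refine intervalIntegral.integral_mono_on (by positivity)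
    ((intervalIntegrable_integrand p hx _ _).const_mul _)
    (intervalIntegrable_integrand (p + 1) hx _ _) fun θ _ ↦ ?_
  have hD := one_sub_mul_sin_sq_pos hx θ
  rw [rpow_add_one hD.ne', mul_comm]
  gcongr
  exact mul_le_of_le_one_right hx₀ (sin_sq_le_one θ)

lemma strictAntiOn_sqrt_one_sub_mul_firstKind :
    StrictAntiOn (fun x ↦ √(1 - x) * 𝒦 x) (Iio 1) := by
  simpa [sqrt_eq_rpow] using strictAntiOn_one_sub_rpow_neg_mul (p := -(1 / 2)) (by norm_num)

lemma strictAntiOn_one_sub_mul_firstKind_sq :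
    StrictAntiOn (fun x ↦ (1 - x) * 𝒦 x ^ 2) (Iio 1) := by
  intro x hx y hy hxy
  have hlt := pow_lt_pow_left₀ (strictAntiOn_sqrt_one_sub_mul_firstKind hx hy hxy)
    (mul_nonneg (sqrt_nonneg _) (pos _ hy).le) two_ne_zero
  simpa only [mul_pow, sq_sqrt (sub_pos.2 hx).le, sq_sqrt (sub_pos.2 hy).le] using hlt

lemma tendsto_firstKind_sub_secondKind_mul_compl :
    Tendsto (fun x ↦ (𝒦 x - ℰ x) * 𝒦 (1 - x)) (𝓝[>] 0) (𝓝 0) := by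
  have hbound : Tendsto (fun x ↦ √x * 𝒦 x * (π / 2)) (𝓝[>] 0) (𝓝 0) := by
    have h𝒦 : ContinuousAt 𝒦 0 := (hasDerivAt _ one_pos).continuousAt
    have : ContinuousAt (fun x ↦ √x * 𝒦 x * (π / 2)) 0 := by fun_prop
    simpa using this.tendsto.mono_left nhdsWithin_le_nhds
  refine squeeze_zero' ?_ ?_ hbound <;> filter_upwards [Ioo_mem_nhdsGT one_pos] with x ⟨hx₀, hx⟩
  · have hle : ℰ x ≤ 𝒦 x := le_of_exponent_le (by norm_num) hx₀.le hx
    exact mul_nonneg (sub_nonneg.2 hle) (pos _ (by linarith)).le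
  · have hle : (1 - x) * 𝒦 x ≤ ℰ x := by
      convert one_sub_mul_le_add_one (-(1 / 2)) hx₀.le hx using 2
      norm_num
    have hcompl : √x * 𝒦 (1 - x) < π / 2 := by
      simpa [apply_zero] using strictAntiOn_sqrt_one_sub_mul_firstKind (mem_Iio.2 one_pos)
        (show 1 - x ∈ Iio 1 by simpa using hx₀) (sub_pos.2 hx)
    calc
      _ ≤ x * 𝒦 x * 𝒦 (1 - x) := by
        gcongr
        · exact (pos _ (by linarith)).le
        · linarith
      _ = √x * 𝒦 x * (√x * 𝒦 (1 - x)) := by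
        nth_rw 1 [← mul_self_sqrt hx₀.le]
        ring
      _ ≤ √x * 𝒦 x * (π / 2) :=
        mul_le_mul_of_nonneg_left hcompl.le (mul_nonneg (sqrt_nonneg x) (pos _ hx).le)

theorem legendre_relation (hx₀ : 0 < x) (hx : x < 1) :
    ℰ x * 𝒦 (1 - x) + 𝒦 x * ℰ (1 - x) - 𝒦 x * 𝒦 (1 - x) = π / 2 := by
  set W : ℝ → ℝ := fun x ↦ 𝒦 x * ℰ (1 - x) - (𝒦 x - ℰ x) * 𝒦 (1 - x)
  have hderiv : ∀ y ∈ Ioo (0 : ℝ) 1, HasDerivAt W 0 y := by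
    intro y ⟨hy₀, hy⟩
    have hK' := (hasDerivAt_firstKind (x := 1 - y) (by linarith) (by linarith)).comp_const_sub 1 y
    have hE' := (hasDerivAt_secondKind (x := 1 - y) (by linarith) (by linarith)).comp_const_sub 1 y
    have hK := hasDerivAt_firstKind hy hy₀.ne'
    have hE := hasDerivAt_secondKind hy hy₀.ne'
    refine ((hK.mul hE').sub ((hK.sub hE).mul hK')).congr_deriv ?_
    have : 1 - y ≠ 0 := by linarith
    simp only [Pi.sub_apply, sub_sub_cancel]
    field_simp
    ring
  have hconst : ∀ y ∈ Ioo (0 : ℝ) 1, W y = W x := fun y hy ↦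
    isOpen_Ioo.is_const_of_deriv_eq_zero isPreconnected_Ioo
      (fun z hz ↦ (hderiv z hz).differentiableAt.differentiableWithinAt)
      (fun z hz ↦ (hderiv z hz).deriv) hy ⟨hx₀, hx⟩
  have hlim : Tendsto W (𝓝[>] 0) (𝓝 (π / 2)) := by
    have h𝒦 : ContinuousAt 𝒦 0 := (hasDerivAt _ one_pos).continuousAt
    have hℰ : Continuous ℰ := continuous (by norm_num)
    have hmain : ContinuousAt (fun x ↦ 𝒦 x * ℰ (1 - x)) 0 := by fun_prop
    simpa only [sub_zero, apply_zero, half_apply_one, mul_one] using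
      (hmain.tendsto.mono_left nhdsWithin_le_nhds).sub tendsto_firstKind_sub_secondKind_mul_compl
  have hW_x : W x = π / 2 := tendsto_nhds_unique (tendsto_const_nhds.congr' <| by
    filter_upwards [Ioo_mem_nhdsGT one_pos] with y hy using (hconst y hy).symm) hlim
  linear_combination hW_x

lemma pi_div_two_lt_firstKind (hx₀ : 0 < x) (hx : x < 1) : π / 2 < 𝒦 x := by
  simpa [apply_zero] using
    strictMonoOn_of_neg (p := -(1 / 2)) (by norm_num) (mem_Iio.2 one_pos) hx hx₀

lemma inv_sq_add_inv_sq_firstKind_lt (hx₀ : 0 < x) (hx : x < 1) (hne : x ≠ 1 / 2) :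
    (𝒦 x ^ 2)⁻¹ + (𝒦 (1 - x) ^ 2)⁻¹ < 2 * (𝒦 (1 / 2) ^ 2)⁻¹ := by
  have hconcave := (strictConcaveOn_rpow_inv (p := -(1 / 2)) (by norm_num)).2 hx
    (show 1 - x ∈ Iio 1 by simpa using hx₀) (by contrapose! hne; linarith)
    one_half_pos one_half_pos (add_halves 1)
  have hinv (z : ℝ) : 𝒦 z ^ (-(1 / 2) : ℝ)⁻¹ = (𝒦 z ^ 2)⁻¹ := by
    rw [show (-(1 / 2) : ℝ)⁻¹ = (-2 : ℤ) by norm_num, rpow_intCast]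
    simp
  have hmid : 1 / 2 * x + 1 / 2 * (1 - x) = 1 / 2 := by ring
  simp only [smul_eq_mul, hmid, hinv] at hconcave
  linarith

end ellipticIntegral

lemma ellK_eq_ellipticIntegral (r : ℝ) : ellK r = 𝒦 (r ^ 2) := rfl

lemma ellK_one_div_sqrt_two : ellK (1 / √2) = 𝒦 (1 / 2) := by
  rw [ellK_eq_ellipticIntegral, div_pow, one_pow, sq_sqrt zero_le_two]

lemma sigmoid_div_one_sub_sigmoid (t : ℝ) : sigmoid t / (1 - sigmoid t) = exp t := by
  rw [← sigmoid_neg, ← sigmoid_mul_rexp_neg, exp_neg]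
  have := (sigmoid_pos t).ne'
  field_simp

lemma one_half_lt_sigmoid {t : ℝ} (ht : 0 < t) : 1 / 2 < sigmoid t := by
  simpa using sigmoid_strictMono ht

lemma sqrt_sigmoid_mem_Ioo (t : ℝ) : √(sigmoid t) ∈ Ioo 0 1 :=
  ⟨sqrt_pos.2 (sigmoid_pos t),
    (sqrt_lt_sqrt (sigmoid_nonneg t) (sigmoid_lt_one t)).trans_eq sqrt_one⟩

/-- The dilatation `K` for which `λ(K) = eᵗ`: the modulus `r` with `r² / (1 - r²) = eᵗ` is given by
`r² = sigmoid t` and `1 - r² = sigmoid (-t)`, and `μ(r) = π / (2K)` reads `K = 𝒦(r) / 𝒦'(r)`. -/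
noncomputable def dilatation (t : ℝ) : ℝ := 𝒦 (sigmoid t) / 𝒦 (sigmoid (-t))

namespace dilatation

open ellipticIntegral

lemma firstKind_sigmoid_pos (t : ℝ) : 0 < 𝒦 (sigmoid t) := pos _ (sigmoid_lt_one t)

lemma pos (t : ℝ) : 0 < dilatation t :=
  div_pos (firstKind_sigmoid_pos t) (firstKind_sigmoid_pos (-t))

lemma apply_zero : dilatation 0 = 1 := by
  simp [dilatation, (ellipticIntegral.pos _ (by norm_num : (2 : ℝ)⁻¹ < 1)).ne']

lemma apply_neg (t : ℝ) : dilatation (-t) = (dilatation t)⁻¹ := by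
  rw [dilatation, dilatation, neg_neg, inv_div]

lemma mu_sqrt_sigmoid (t : ℝ) : mu √(sigmoid t) = π / (2 * dilatation t) := by
  have h₁ := (firstKind_sigmoid_pos t).ne'
  have h₂ := (firstKind_sigmoid_pos (-t)).ne'
  rw [mu, sq_sqrt (sigmoid_nonneg t), ← sigmoid_neg, ellK_eq_ellipticIntegral,
    ellK_eq_ellipticIntegral, sq_sqrt (sigmoid_nonneg t), sq_sqrt (sigmoid_nonneg (-t)), dilatation]
  field_simp

lemma hasDerivAt_firstKind_sigmoid (t : ℝ) : HasDerivAt (fun t ↦ 𝒦 (sigmoid t))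
    ((ℰ (sigmoid t) - sigmoid (-t) * 𝒦 (sigmoid t)) / 2) t := by
  refine ((hasDerivAt_firstKind (sigmoid_lt_one t) (sigmoid_pos t).ne').comp t
    (hasDerivAt_sigmoid t)).congr_deriv ?_
  have h₁ := (sigmoid_pos t).ne'
  have h₂ := (sub_pos.2 (sigmoid_lt_one t)).ne'
  rw [sigmoid_neg]
  field_simp

lemma hasDerivAt (t : ℝ) : HasDerivAt dilatation (π / (4 * 𝒦 (sigmoid (-t)) ^ 2)) t := by
  have hK := hasDerivAt_firstKind_sigmoid t
  have hK' := (hasDerivAt_firstKind_sigmoid (-t)).scomp t (hasDerivAt_neg t)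
  refine (hK.div hK' (firstKind_sigmoid_pos (-t)).ne').congr_deriv ?_
  have hlegendre := legendre_relation (sigmoid_pos t) (sigmoid_lt_one t)
  have h := (firstKind_sigmoid_pos (-t)).ne'
  rw [← sigmoid_neg] at hlegendre
  simp only [Function.comp_apply, neg_neg, smul_eq_mul]
  field_simp
  linear_combination 4 * hlegendre - 4 * 𝒦 (sigmoid t) * 𝒦 (sigmoid (-t)) * sigmoid_neg t

lemma hasDerivAt_inv (t : ℝ) :
    HasDerivAt (fun t ↦ (dilatation t)⁻¹) (-(π / (4 * 𝒦 (sigmoid t) ^ 2))) t := by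
  simpa [Function.comp_def, apply_neg] using (hasDerivAt (-t)).scomp t (hasDerivAt_neg t)

variable {t : ℝ}

lemma pi_mul_sub_one_lt (ht : 0 < t) : π * (dilatation t - 1) < t := by
  refine lt_of_hasDerivAt_lt (fun t ↦ ((hasDerivAt t).sub_const 1).const_mul π)
    (fun t ↦ hasDerivAt_id' t) (fun t _ ↦ ?_) (by simp [apply_zero]) ht
  have hK := pi_div_two_lt_firstKind (sigmoid_pos (-t)) (sigmoid_lt_one (-t))
  have hpos := firstKind_sigmoid_pos (-t)
  rw [mul_div_assoc', div_lt_one (by positivity)]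
  nlinarith [pi_pos]

lemma lt_mul_sub_one (ht : 0 < t) : t < 4 / π * 𝒦 (1 / 2) ^ 2 * (dilatation t - 1) := by
  refine lt_of_hasDerivAt_lt (fun t ↦ hasDerivAt_id' t)
    (fun t ↦ ((hasDerivAt t).sub_const 1).const_mul _) (fun t ht ↦ ?_) (by simp [apply_zero]) ht
  have hK : 𝒦 (sigmoid (-t)) < 𝒦 (1 / 2) :=
    strictMonoOn_of_neg (by norm_num) (sigmoid_lt_one (-t)) (mem_Iio.2 one_half_lt_one)
      (by linarith [sigmoid_neg t, one_half_lt_sigmoid ht])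
  have hpos := firstKind_sigmoid_pos (-t)
  calc
    (1 : ℝ) < 𝒦 (1 / 2) ^ 2 / 𝒦 (sigmoid (-t)) ^ 2 := by
      rw [one_lt_div (by positivity)]
      gcongr
    _ = _ := by field_simp

lemma mul_sub_inv_lt (ht : 0 < t) :
    4 / π * 𝒦 (1 / 2) ^ 2 / 2 * (dilatation t - (dilatation t)⁻¹) < t := by
  refine lt_of_hasDerivAt_lt (fun t ↦ ((hasDerivAt t).sub (hasDerivAt_inv t)).const_mul _)
    (fun t ↦ hasDerivAt_id' t) (fun t ht ↦ ?_) (by simp [apply_zero]) ht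
  have hK := inv_sq_add_inv_sq_firstKind_lt (sigmoid_pos t) (sigmoid_lt_one t)
    (one_half_lt_sigmoid ht).ne'
  rw [← sigmoid_neg] at hK
  have hpos : 0 < 𝒦 (1 / 2) := ellipticIntegral.pos _ (by norm_num)
  have hpos₁ := firstKind_sigmoid_pos t
  have hpos₂ := firstKind_sigmoid_pos (-t)
  calc
    _ = 𝒦 (1 / 2) ^ 2 / 2 * ((𝒦 (sigmoid t) ^ 2)⁻¹ + (𝒦 (sigmoid (-t)) ^ 2)⁻¹) := by
      field_simp
      ring
    _ < 𝒦 (1 / 2) ^ 2 / 2 * (2 * (𝒦 (1 / 2) ^ 2)⁻¹) := by gcongr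
    _ = 1 := by field_simp

lemma lt_pi_mul_sub_one_add_mul_one_sub_inv (ht : 0 < t) :
    t < π * (dilatation t - 1) + 4 / π * 𝒦 (1 / 2) ^ 2 / 2 * (1 - (dilatation t)⁻¹) := by
  refine lt_of_hasDerivAt_lt (fun t ↦ hasDerivAt_id' t)
    (fun t ↦ (((hasDerivAt t).sub_const 1).const_mul π).add
      (((hasDerivAt_inv t).const_sub 1).const_mul _)) (fun t ht ↦ ?_) (by simp [apply_zero]) ht
  have hpos₁ := firstKind_sigmoid_pos t
  have hpos₂ := firstKind_sigmoid_pos (-t)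
  have hupper : sigmoid t < π ^ 2 / (4 * 𝒦 (sigmoid (-t)) ^ 2) := by
    have := strictAntiOn_one_sub_mul_firstKind_sq (mem_Iio.2 one_pos) (sigmoid_lt_one (-t))
      (sigmoid_pos (-t))
    simp only [← sigmoid_neg, neg_neg, ellipticIntegral.apply_zero] at this
    rw [lt_div_iff₀ (by positivity)]
    linarith
  have hlower : sigmoid (-t) < 𝒦 (1 / 2) ^ 2 / (2 * 𝒦 (sigmoid t) ^ 2) := by
    have := strictAntiOn_one_sub_mul_firstKind_sq (mem_Iio.2 one_half_lt_one) (sigmoid_lt_one t)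
      (one_half_lt_sigmoid ht)
    simp only [← sigmoid_neg] at this
    rw [lt_div_iff₀ (by positivity)]
    linarith
  calc
    (1 : ℝ) = sigmoid t + sigmoid (-t) := by rw [sigmoid_neg, add_sub_cancel]
    _ < π ^ 2 / (4 * 𝒦 (sigmoid (-t)) ^ 2) + 𝒦 (1 / 2) ^ 2 / (2 * 𝒦 (sigmoid t) ^ 2) :=
      add_lt_add hupper hlower
    _ = _ := by field_simp

lemma exists_pos_eq {K : ℝ} (hK : 1 < K) : ∃ t, 0 < t ∧ dilatation t = K := by
  have ha : 0 < 4 / π * 𝒦 (1 / 2) ^ 2 := by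
    have : 0 < 𝒦 (1 / 2) := ellipticIntegral.pos _ (by norm_num)
    positivity
  set a := 4 / π * 𝒦 (1 / 2) ^ 2
  have hT : 0 < a * (K - 1) := mul_pos ha (sub_pos.2 hK)
  have hlt : K < dilatation (a * (K - 1)) := by
    linarith [lt_of_mul_lt_mul_left (lt_mul_sub_one hT) ha.le]
  have hcont : Continuous dilatation := continuous_iff_continuousAt.2 fun t ↦
    (hasDerivAt t).continuousAt
  obtain ⟨t, ht, rfl⟩ := intermediate_value_Ioo hT.le hcont.continuousOn
    ⟨apply_zero.trans_lt hK, hlt⟩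
  exact ⟨t, ht.1, rfl⟩

end dilatation

end

theorem stmt_6 (lam : ℝ → ℝ)
    (hlam : ∀ K : ℝ, 0 < K → ∀ r ∈ Set.Ioo (0:ℝ) 1,
      mu r = Real.pi / (2 * K) → lam K = r ^ 2 / (1 - r ^ 2)) (a b : ℝ)
    (ha : a = 4 / Real.pi * ellK (1 / Real.sqrt 2) ^ 2) (hb : b = a / 2) :
    ∀ K : ℝ, 1 < K →
      max (Real.exp (Real.pi * (K - 1))) (Real.exp (b * (K - 1 / K))) < lam K ∧
      lam K < min (Real.exp (a * (K - 1))) (Real.exp ((Real.pi + b / K) * (K - 1))) := by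
  intro K hK
  obtain ⟨t, ht, rfl⟩ := dilatation.exists_pos_eq hK
  have hlam_eq : lam (dilatation t) = Real.exp t := by
    rw [hlam _ (dilatation.pos t) _ (sqrt_sigmoid_mem_Ioo t) (dilatation.mu_sqrt_sigmoid t),
      Real.sq_sqrt (Real.sigmoid_nonneg t), sigmoid_div_one_sub_sigmoid]
  have hsplit : (Real.pi + b / dilatation t) * (dilatation t - 1) =
      Real.pi * (dilatation t - 1) + b * (1 - (dilatation t)⁻¹) := by
    have := (dilatation.pos t).ne'
    field_simp
  rw [hlam_eq, max_lt_iff, lt_min_iff, Real.exp_lt_exp, Real.exp_lt_exp, Real.exp_lt_exp,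
    Real.exp_lt_exp, hsplit, one_div, hb, ha, ellK_one_div_sqrt_two]
  exact ⟨⟨dilatation.pi_mul_sub_one_lt ht, dilatation.mul_sub_inv_lt ht⟩,
    dilatation.lt_mul_sub_one ht, dilatation.lt_pi_mul_sub_one_add_mul_one_sub_inv ht⟩
end

section
/- For every K > 1, (1/16)·e^{πK} − 1/2 + c₁(K)·e^{−πK} < λ(K) < (1/16)·e^{πK} − 1/2 + c₂(K)·e^{−πK}, where c₁(K) = 1/4 + 1/(4e^{−2πK} + 1) and c₂(K) = (1/16)·(1 + 4·(5e^{−4πK} + 14e^{−2πK} + 5)/(e^{−6πK} + 7e^{−4πK} + 7e^{−2πK} + 1)). -/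
open Set Filter

/-!
Put `L s = 2s / (1 + s²)`. Landen's transformation gives `𝒦(L s) = (1 + s²) 𝒦(s²)` and a companion
formula for the complementary moduli, hence `μ(s²) = 2 μ(L s)`. Combined with
`μ(r) μ(√(1 - r²)) = π² / 4` this yields `μ((1 - r) / (1 + r)) = π² / (2 μ(r))`, so that
`λ(K) = (1 / L c - 1) / 2` when `μ(c) = πK`.

Both bounds on `c` rest on one infimum argument: if `F` is bounded below and to every `x` there is a
`y` with `F y < 2 F x`, then `F > 0`. For `F k = log 4 - log k - μ(k)` take `k = L s` and pass to
`s²`; for `F b = μ(L (L b)) + log b` pass from `b` to the `d` with `L (L d) = (L b)²`, which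
satisfies `d < b²`. Boundedness comes from `μ(r) = -log r + O(1)`. With `q = exp (-πK)` the two
inequalities say `L (L q) < c < L (2q)`; applying `L` once more turns them into the stated
rational functions of `q`.
-/

open scoped Real

lemma pos_of_forall_exists_lt_mul {α : Type*} {S : Set α} {F : α → ℝ} {c : ℝ} (hc : 1 < c)
    (hbdd : BddBelow (F '' S)) (hF : ∀ x ∈ S, ∃ y ∈ S, F y < c * F x) {x : α} (hx : x ∈ S) :
    0 < F x := by
  set m := sInf (F '' S)
  have hlt : ∀ z ∈ S, m < c * F z := fun z hz => by
    obtain ⟨y, hy, hyz⟩ := hF z hz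
    exact (csInf_le hbdd (mem_image_of_mem F hy)).trans_lt hyz
  have hc0 : 0 < c := zero_lt_one.trans hc
  have hm : m / c ≤ m := by
    refine le_csInf ⟨F x, mem_image_of_mem F hx⟩ ?_
    rintro _ ⟨z, hz, rfl⟩
    exact (div_le_iff₀' hc0).2 (hlt z hz).le
  have hm0 : 0 ≤ m := by
    rw [div_le_iff₀ hc0] at hm
    nlinarith
  exact pos_of_mul_pos_right (hm0.trans_lt (hlt x hx)) hc0.le

section Landen

/-- Landen's ascending transformation `s ↦ 2s / (1 + s²)`. It relates the moduli `s ^ 2` and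
`landen s`, which keeps square roots out of the classical form `x ↦ 2√x / (1 + x)`. -/
noncomputable def landen (s : ℝ) : ℝ :=
  2 * s / (1 + s ^ 2)

lemma landen_lt_landen {a b : ℝ} (hab : a < b) (h : a * b < 1) : landen a < landen b := by
  unfold landen
  rw [div_lt_div_iff₀ (by positivity) (by positivity)]
  nlinarith [mul_pos (sub_pos.2 hab) (sub_pos.2 h)]

lemma strictMonoOn_landen : StrictMonoOn landen (Icc 0 1) := fun _ ha _ hb hab =>
  landen_lt_landen hab (mul_lt_one_of_nonneg_of_lt_one_left ha.1 (hab.trans_le hb.2) hb.2)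

lemma landen_pos {s : ℝ} (hs : 0 < s) : 0 < landen s := by
  unfold landen
  positivity

lemma landen_le_one (s : ℝ) : landen s ≤ 1 := by
  unfold landen
  rw [div_le_one (by positivity)]
  linarith [sq_nonneg (s - 1)]

lemma one_sub_landen_sq (s : ℝ) : 1 - landen s ^ 2 = ((1 - s ^ 2) / (1 + s ^ 2)) ^ 2 := by
  unfold landen
  field_simp
  ring

lemma landen_sq_lt_one {s : ℝ} (hs : s ^ 2 < 1) : landen s ^ 2 < 1 := by
  have : 0 < ((1 - s ^ 2) / (1 + s ^ 2)) ^ 2 := by positivity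
  linarith [one_sub_landen_sq s]

lemma landen_lt_two_mul {s : ℝ} (hs : 0 < s) : landen s < 2 * s :=
  div_lt_self (by positivity) (by linarith [pow_pos hs 2])

lemma landen_sq_lt_landen_landen_sq {b : ℝ} (hb : b ∈ Ioo (0 : ℝ) 1) :
    landen b ^ 2 < landen (landen (b ^ 2)) := by
  obtain ⟨hb0, hb1⟩ := hb
  have hlanden : landen (landen (b ^ 2)) =
      4 * b ^ 2 * (1 + b ^ 4) / ((1 + b ^ 4) ^ 2 + 4 * b ^ 4) := by
    unfold landen
    field_simp
    ring
  have hgap : 0 < b ^ 2 * (b ^ 2 * (1 - b ^ 2) ^ 2) := by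
    have : 0 < 1 - b ^ 2 := by nlinarith
    positivity
  rw [hlanden, landen, div_pow, div_lt_div_iff₀ (by positivity) (by positivity)]
  nlinarith

lemma landen_mem_Ioo {s : ℝ} (hs : s ∈ Ioo (0 : ℝ) 1) : landen s ∈ Ioo (0 : ℝ) 1 :=
  ⟨landen_pos hs.1, (landen_lt_landen hs.2 (by simpa using hs.2)).trans_le (landen_le_one 1)⟩

lemma landen_landen_lt_landen_landen_iff {a b : ℝ} (ha : a ∈ Ioo (0 : ℝ) 1)
    (hb : b ∈ Ioo (0 : ℝ) 1) : landen (landen a) < landen (landen b) ↔ a < b := by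
  rw [strictMonoOn_landen.lt_iff_lt (Ioo_subset_Icc_self (landen_mem_Ioo ha))
      (Ioo_subset_Icc_self (landen_mem_Ioo hb)),
    strictMonoOn_landen.lt_iff_lt (Ioo_subset_Icc_self ha) (Ioo_subset_Icc_self hb)]

lemma surjOn_landen : SurjOn landen (Ioo 0 1) (Ioo 0 1) := by
  have hcont : Continuous landen := by
    unfold landen
    exact Continuous.div (by fun_prop) (by fun_prop) fun s => by positivity
  have hivt := intermediate_value_Ioo zero_le_one hcont.continuousOn
  have h0 : landen 0 = 0 := by norm_num [landen]
  have h1 : landen 1 = 1 := by norm_num [landen]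
  rwa [h0, h1] at hivt

end Landen

section EllipticIntegral

lemma one_sub_mul_sin_sq_pos {m : ℝ} (hm : m < 1) (θ : ℝ) : 0 < 1 - m * Real.sin θ ^ 2 := by
  have hsin := Real.sin_sq_le_one θ
  rcases le_total m 0 with hm0 | hm0
  · linarith [mul_nonneg (neg_nonneg.2 hm0) (sq_nonneg (Real.sin θ))]
  · linarith [mul_le_mul_of_nonneg_left hsin hm0]

lemma ellK_eq_integral_inv_sqrt {r : ℝ} (hr : r ^ 2 < 1) :
    ellK r = ∫ θ in (0 : ℝ)..(π / 2), (√(1 - r ^ 2 * Real.sin θ ^ 2))⁻¹ := by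
  unfold ellK
  congr 1 with θ
  rw [Real.rpow_neg (one_sub_mul_sin_sq_pos hr θ).le, Real.sqrt_eq_rpow]

lemma continuous_inv_sqrt_one_sub_mul_sin_sq {m : ℝ} (hm : m < 1) :
    Continuous fun θ => (√(1 - m * Real.sin θ ^ 2))⁻¹ :=
  Continuous.inv₀ (by fun_prop) fun θ => (Real.sqrt_pos.2 (one_sub_mul_sin_sq_pos hm θ)).ne'

lemma pi_div_two_le_ellK {r : ℝ} (hr : r ^ 2 < 1) : π / 2 ≤ ellK r := by
  calc π / 2 = ∫ _ in (0 : ℝ)..(π / 2), (1 : ℝ) := by simp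
    _ ≤ ∫ θ in (0 : ℝ)..(π / 2), (√(1 - r ^ 2 * Real.sin θ ^ 2))⁻¹ := by
      refine intervalIntegral.integral_mono_on (by positivity) (by simp)
        ((continuous_inv_sqrt_one_sub_mul_sin_sq hr).intervalIntegrable _ _) fun θ _ => ?_
      refine (one_le_inv₀ (Real.sqrt_pos.2 (one_sub_mul_sin_sq_pos hr θ))).2 (Real.sqrt_le_one.2 ?_)
      exact sub_le_self _ (by positivity)
    _ = ellK r := (ellK_eq_integral_inv_sqrt hr).symm

lemma ellK_pos {r : ℝ} (hr : r ^ 2 < 1) : 0 < ellK r :=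
  Real.pi_div_two_pos.trans_le (pi_div_two_le_ellK hr)

lemma ellK_le {r : ℝ} (hr : r ^ 2 < 1) : ellK r ≤ π / 2 / √(1 - r ^ 2) := by
  calc ellK r = ∫ θ in (0 : ℝ)..(π / 2), (√(1 - r ^ 2 * Real.sin θ ^ 2))⁻¹ :=
        ellK_eq_integral_inv_sqrt hr
    _ ≤ ∫ _ in (0 : ℝ)..(π / 2), (√(1 - r ^ 2))⁻¹ := by
      refine intervalIntegral.integral_mono_on (by positivity)
        ((continuous_inv_sqrt_one_sub_mul_sin_sq hr).intervalIntegrable _ _) (by simp) fun θ _ => ?_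
      have hsin := Real.sin_sq_le_one θ
      gcongr
      exact mul_le_of_le_one_right (sq_nonneg r) hsin
    _ = π / 2 / √(1 - r ^ 2) := by simp [div_eq_mul_inv]

lemma continuousOn_ellK : ContinuousOn ellK {r | r ^ 2 < 1} := by
  rw [continuousOn_iff_continuous_domRestrict]
  have hcont : Continuous fun r : {r : ℝ | r ^ 2 < 1} =>
      ∫ θ in (0 : ℝ)..(π / 2), (√(1 - (r : ℝ) ^ 2 * Real.sin θ ^ 2))⁻¹ := by
    apply intervalIntegral.continuous_parametric_intervalIntegral_of_continuous'
    exact Continuous.inv₀ (by fun_prop) fun p =>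
      (Real.sqrt_pos.2 (one_sub_mul_sin_sq_pos p.1.2 p.2)).ne'
  exact hcont.congr fun r => (ellK_eq_integral_inv_sqrt r.2).symm

end EllipticIntegral

section GaussTransformation

variable {x θ : ℝ}

/-- The sine of the amplitude in Gauss's substitution
`sin φ = (1 + x) sin θ / (1 + x sin² θ)`, which turns the elliptic integral of modulus
`2√x / (1 + x)` into that of modulus `x`. -/
noncomputable def gaussSin (x θ : ℝ) : ℝ :=
  (1 + x) * Real.sin θ / (1 + x * Real.sin θ ^ 2)

lemma one_add_mul_sin_sq_pos (hx : -1 < x) (θ : ℝ) : 0 < 1 + x * Real.sin θ ^ 2 := by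
  have := one_sub_mul_sin_sq_pos (neg_lt.1 hx) θ
  rwa [neg_mul, sub_neg_eq_add] at this

lemma continuous_gaussSin (hx : -1 < x) : Continuous (gaussSin x) := by
  unfold gaussSin
  exact Continuous.div (by fun_prop) (by fun_prop) fun θ => (one_add_mul_sin_sq_pos hx θ).ne'

lemma one_sub_gaussSin_sq (hx : x ∈ Ioo (-1) 1) :
    1 - gaussSin x θ ^ 2 =
      (Real.cos θ * √(1 - x ^ 2 * Real.sin θ ^ 2) / (1 + x * Real.sin θ ^ 2)) ^ 2 := by
  have hadd := one_add_mul_sin_sq_pos hx.1 θ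
  have hmod := one_sub_mul_sin_sq_pos ((sq_lt_one_iff_abs_lt_one x).2 (abs_lt.2 hx)) θ
  rw [gaussSin, div_pow, div_pow, mul_pow _ (√_), Real.sq_sqrt hmod.le, Real.cos_sq']
  field_simp
  ring

lemma gaussSin_mem_Icc (hx : x ∈ Ioo (-1) 1) : gaussSin x θ ∈ Icc (-1) 1 := by
  refine abs_le.1 (sq_le_one_iff_abs_le_one _ |>.1 ?_)
  rw [← sub_nonneg, one_sub_gaussSin_sq hx]
  positivity

lemma sqrt_one_sub_mul_gaussSin_sq (hx : x ∈ Ioo (-1) 1) :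
    √(1 - 4 * x / (1 + x) ^ 2 * gaussSin x θ ^ 2) =
      (1 - x * Real.sin θ ^ 2) / (1 + x * Real.sin θ ^ 2) := by
  have hadd := one_add_mul_sin_sq_pos hx.1 θ
  have hsub := one_sub_mul_sin_sq_pos hx.2 θ
  have hx1 : 0 < 1 + x := by linarith [hx.1]
  rw [← Real.sqrt_sq (div_pos hsub hadd).le, gaussSin]
  congr 1
  field_simp
  ring

lemma hasDerivAt_gaussSin (hx : -1 < x) :
    HasDerivAt (gaussSin x)
      ((1 + x) * Real.cos θ * (1 - x * Real.sin θ ^ 2) / (1 + x * Real.sin θ ^ 2) ^ 2) θ := by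
  have hnum := (Real.hasDerivAt_sin θ).const_mul (1 + x)
  have hden := (((Real.hasDerivAt_sin θ).fun_pow 2).const_mul x).const_add 1
  refine (hnum.fun_div hden (one_add_mul_sin_sq_pos hx θ).ne').congr_deriv ?_
  push_cast
  congr 1
  ring

lemma hasDerivAt_arcsin_gaussSin (hx : x ∈ Ioo (-1) 1) (hθ : 0 < Real.cos θ) :
    HasDerivAt (fun θ => Real.arcsin (gaussSin x θ))
      ((1 + x) * (1 - x * Real.sin θ ^ 2) /
        ((1 + x * Real.sin θ ^ 2) * √(1 - x ^ 2 * Real.sin θ ^ 2))) θ := by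
  have hadd := one_add_mul_sin_sq_pos hx.1 θ
  have hmod := Real.sqrt_pos.2
    (one_sub_mul_sin_sq_pos ((sq_lt_one_iff_abs_lt_one x).2 (abs_lt.2 hx)) θ)
  have hcos : √(1 - gaussSin x θ ^ 2) =
      Real.cos θ * √(1 - x ^ 2 * Real.sin θ ^ 2) / (1 + x * Real.sin θ ^ 2) := by
    rw [one_sub_gaussSin_sq hx, Real.sqrt_sq (by positivity)]
  have hne : 1 - gaussSin x θ ^ 2 ≠ 0 := by
    rw [one_sub_gaussSin_sq hx]
    positivity
  have harcsin := Real.hasDerivAt_arcsin (x := gaussSin x θ)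
    (fun h => hne (by rw [h]; norm_num)) (fun h => hne (by rw [h]; norm_num))
  refine (harcsin.comp θ (hasDerivAt_gaussSin hx.1)).congr_deriv ?_
  rw [hcos]
  field_simp

lemma integral_gauss_transformation (hx : x ∈ Ioo (-1) 1) :
    ∫ φ in (0 : ℝ)..(π / 2), (√(1 - 4 * x / (1 + x) ^ 2 * Real.sin φ ^ 2))⁻¹ =
      (1 + x) * ∫ θ in (0 : ℝ)..(π / 2), (√(1 - x ^ 2 * Real.sin θ ^ 2))⁻¹ := by
  have hx1 : 0 < 1 + x := by linarith [hx.1]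
  have hm : 4 * x / (1 + x) ^ 2 < 1 := by
    rw [div_lt_one (by positivity)]
    nlinarith [sq_pos_of_pos (sub_pos.2 hx.2)]
  have hx2 : x ^ 2 < 1 := (sq_lt_one_iff_abs_lt_one x).2 (abs_lt.2 hx)
  have hcont : Continuous fun θ => Real.arcsin (gaussSin x θ) :=
    Real.continuous_arcsin.comp (continuous_gaussSin hx.1)
  have hintegrand (θ : ℝ) :
      (√(1 - 4 * x / (1 + x) ^ 2 * Real.sin (Real.arcsin (gaussSin x θ)) ^ 2))⁻¹ *
        ((1 + x) * (1 - x * Real.sin θ ^ 2) /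
          ((1 + x * Real.sin θ ^ 2) * √(1 - x ^ 2 * Real.sin θ ^ 2))) =
      (1 + x) * (√(1 - x ^ 2 * Real.sin θ ^ 2))⁻¹ := by
    have hadd := one_add_mul_sin_sq_pos hx.1 θ
    have hsub := one_sub_mul_sin_sq_pos hx.2 θ
    have hmem := gaussSin_mem_Icc (θ := θ) hx
    rw [Real.sin_arcsin hmem.1 hmem.2, sqrt_one_sub_mul_gaussSin_sq hx]
    field_simp
  have hsubst := intervalIntegral.integral_comp_mul_deriv''' (a := 0) (b := π / 2)
    (f := fun θ => Real.arcsin (gaussSin x θ))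
    (g := fun φ => (√(1 - 4 * x / (1 + x) ^ 2 * Real.sin φ ^ 2))⁻¹) hcont.continuousOn
    (fun θ hθ => by
      rw [min_eq_left (by positivity), max_eq_right (by positivity)] at hθ
      have hcos := Real.cos_pos_of_mem_Ioo ⟨by linarith [hθ.1, Real.pi_pos], hθ.2⟩
      exact (hasDerivAt_arcsin_gaussSin hx hcos).hasDerivWithinAt)
    (continuous_inv_sqrt_one_sub_mul_sin_sq hm).continuousOn
    ((continuous_inv_sqrt_one_sub_mul_sin_sq hm).continuousOn.integrableOn_compact
      (isCompact_uIcc.image hcont))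
    (by
      simp only [Function.comp_def, hintegrand]
      exact ((continuous_inv_sqrt_one_sub_mul_sin_sq hx2).const_mul _).continuousOn
        |>.integrableOn_compact isCompact_uIcc)
  have hzero : Real.arcsin (gaussSin x 0) = 0 := by simp [gaussSin]
  have hright : Real.arcsin (gaussSin x (π / 2)) = π / 2 := by
    simp [gaussSin, hx1.ne']
  simp only [Function.comp_def, hintegrand, hzero, hright] at hsubst
  rw [← hsubst, intervalIntegral.integral_const_mul]

lemma ellK_landen {s : ℝ} (hs : s ^ 2 < 1) : ellK (landen s) = (1 + s ^ 2) * ellK (s ^ 2) := by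
  have hs2 : (s ^ 2) ^ 2 < 1 := pow_lt_one₀ (sq_nonneg s) hs two_ne_zero
  have hmod : landen s ^ 2 = 4 * s ^ 2 / (1 + s ^ 2) ^ 2 := by
    rw [landen, div_pow]
    ring
  rw [ellK_eq_integral_inv_sqrt (landen_sq_lt_one hs), ellK_eq_integral_inv_sqrt hs2, hmod]
  exact integral_gauss_transformation ⟨by linarith [sq_nonneg s], hs⟩

end GaussTransformation

section ComplementaryModulus

variable {r : ℝ}

lemma sq_lt_one_of_mem_Ioo (hr : r ∈ Ioo (0 : ℝ) 1) : r ^ 2 < 1 :=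
  pow_lt_one₀ hr.1.le hr.2 two_ne_zero

lemma sqrt_one_sub_sq_sq (hr : r ∈ Ioo (0 : ℝ) 1) : √(1 - r ^ 2) ^ 2 = 1 - r ^ 2 :=
  Real.sq_sqrt (sub_nonneg.2 (sq_lt_one_of_mem_Ioo hr).le)

lemma sqrt_one_sub_sq_mem_Ioo (hr : r ∈ Ioo (0 : ℝ) 1) : √(1 - r ^ 2) ∈ Ioo (0 : ℝ) 1 := by
  refine ⟨Real.sqrt_pos.2 (sub_pos.2 (sq_lt_one_of_mem_Ioo hr)), (Real.sqrt_lt' one_pos).2 ?_⟩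
  linarith [pow_pos hr.1 2]

lemma sin_sq_add_mul_cos_sq_pos (hr : r ≠ 0) (θ : ℝ) :
    0 < Real.sin θ ^ 2 + r ^ 2 * Real.cos θ ^ 2 := by
  rcases eq_or_ne (Real.cos θ) 0 with hcos | hcos
  · have := Real.sin_sq_add_cos_sq θ
    rw [hcos] at this ⊢
    linarith
  · positivity

lemma ellK_sqrt_one_sub_sq_eq_integral (hr : r ∈ Ioo (0 : ℝ) 1) :
    ellK √(1 - r ^ 2) =
      ∫ θ in (0 : ℝ)..(π / 2), (√(Real.sin θ ^ 2 + r ^ 2 * Real.cos θ ^ 2))⁻¹ := by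
  rw [ellK_eq_integral_inv_sqrt (sq_lt_one_of_mem_Ioo (sqrt_one_sub_sq_mem_Ioo hr)),
    sqrt_one_sub_sq_sq hr]
  have hreflect := intervalIntegral.integral_comp_sub_left (a := 0) (b := π / 2)
    (fun θ => (√(1 - (1 - r ^ 2) * Real.sin θ ^ 2))⁻¹) (π / 2)
  simp only [sub_self, sub_zero, Real.sin_pi_div_two_sub] at hreflect
  rw [← hreflect]
  congr 1 with θ
  rw [Real.sin_sq]
  ring_nf

lemma continuous_inv_sqrt_sin_sq_add_mul_cos_sq (hr : r ≠ 0) :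
    Continuous fun θ => (√(Real.sin θ ^ 2 + r ^ 2 * Real.cos θ ^ 2))⁻¹ :=
  Continuous.inv₀ (by fun_prop) fun θ => (Real.sqrt_pos.2 (sin_sq_add_mul_cos_sq_pos hr θ)).ne'

lemma continuous_inv_sqrt_sq_add_sq (hr : r ≠ 0) : Continuous fun t : ℝ => (√(t ^ 2 + r ^ 2))⁻¹ :=
  Continuous.inv₀ (by fun_prop) fun t => by positivity

lemma integral_inv_sqrt_sq_add_sq (hr : 0 < r) (a : ℝ) :
    ∫ t in (0 : ℝ)..a, (√(t ^ 2 + r ^ 2))⁻¹ = Real.arsinh (a / r) := by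
  have hderiv (t : ℝ) : HasDerivAt (fun t => Real.arsinh (t / r)) (√(t ^ 2 + r ^ 2))⁻¹ t := by
    refine ((hasDerivAt_id t).div_const r).arsinh.congr_deriv ?_
    have hsqrt : √(t ^ 2 + r ^ 2) = r * √(1 + (t / r) ^ 2) := by
      rw [← Real.sqrt_sq hr.le, ← Real.sqrt_mul (sq_nonneg r), Real.sqrt_sq hr.le]
      congr 1
      field_simp
      ring
    rw [hsqrt, mul_inv, smul_eq_mul, one_div, mul_comm, id]
  rw [intervalIntegral.integral_eq_sub_of_hasDerivAt (fun t _ => hderiv t)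
    ((continuous_inv_sqrt_sq_add_sq hr.ne').intervalIntegrable _ _)]
  simp

lemma sqrt_sin_sq_add_mul_cos_sq_le {θ : ℝ} (hθ : 0 ≤ θ) (r : ℝ) (hθπ : θ ≤ π) :
    √(Real.sin θ ^ 2 + r ^ 2 * Real.cos θ ^ 2) ≤ √(θ ^ 2 + r ^ 2) := by
  have hsin := Real.sin_nonneg_of_nonneg_of_le_pi hθ hθπ
  have hcos := Real.cos_sq_le_one θ
  gcongr
  · exact Real.sin_le hθ
  · exact mul_le_of_le_one_right (sq_nonneg r) hcos

lemma cos_mul_sqrt_sq_add_sq_le {θ : ℝ} (hθ : θ ∈ Icc 0 (π / 2)) (r : ℝ) :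
    Real.cos θ * √(θ ^ 2 + r ^ 2) ≤ √(Real.sin θ ^ 2 + r ^ 2 * Real.cos θ ^ 2) := by
  have hcos : 0 ≤ Real.cos θ :=
    Real.cos_nonneg_of_neg_pi_div_two_le_of_le (by linarith [hθ.1, Real.pi_pos]) hθ.2
  have hsin : θ * Real.cos θ ≤ Real.sin θ := by
    rcases hθ.2.eq_or_lt with rfl | hlt
    · simp
    · have hcos' := Real.cos_pos_of_mem_Ioo ⟨by linarith [hθ.1, Real.pi_pos], hlt⟩
      rw [← le_div_iff₀ hcos', ← Real.tan_eq_sin_div_cos]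
      exact Real.le_tan hθ.1 hlt
  refine Real.le_sqrt_of_sq_le ?_
  rw [mul_pow, Real.sq_sqrt (by positivity)]
  nlinarith [pow_le_pow_left₀ (mul_nonneg hθ.1 hcos) hsin 2]

lemma one_sub_cos_le_sqrt {θ : ℝ} (hθ : θ ∈ Icc 0 (π / 2)) (r : ℝ) :
    1 - Real.cos θ ≤ √(Real.sin θ ^ 2 + r ^ 2 * Real.cos θ ^ 2) := by
  have hcos : 0 ≤ Real.cos θ :=
    Real.cos_nonneg_of_neg_pi_div_two_le_of_le (by linarith [hθ.1, Real.pi_pos]) hθ.2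
  refine Real.le_sqrt_of_sq_le ?_
  nlinarith [Real.sin_sq_add_cos_sq θ, Real.cos_le_one θ, sq_nonneg (r * Real.cos θ)]

lemma inv_sqrt_sin_sq_add_mul_cos_sq_le {θ : ℝ} (hr : r ≠ 0) (hθ : θ ∈ Icc 0 (π / 2)) :
    (√(Real.sin θ ^ 2 + r ^ 2 * Real.cos θ ^ 2))⁻¹ ≤ (√(θ ^ 2 + r ^ 2))⁻¹ + 1 := by
  have hcos := cos_mul_sqrt_sq_add_sq_le hθ r
  have hone := one_sub_cos_le_sqrt hθ r
  have hD := Real.sqrt_pos.2 (sin_sq_add_mul_cos_sq_pos hr θ)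
  have hN : 0 < √(θ ^ 2 + r ^ 2) := by positivity
  set D := √(Real.sin θ ^ 2 + r ^ 2 * Real.cos θ ^ 2)
  rw [inv_le_iff_one_le_mul₀ hD, add_mul, one_mul, inv_mul_eq_div]
  linarith [(le_div_iff₀ hN).2 hcos]

lemma arsinh_le_ellK_sqrt_one_sub_sq (hr : r ∈ Ioo (0 : ℝ) 1) :
    Real.arsinh (π / 2 / r) ≤ ellK √(1 - r ^ 2) := by
  rw [ellK_sqrt_one_sub_sq_eq_integral hr, ← integral_inv_sqrt_sq_add_sq hr.1]
  refine intervalIntegral.integral_mono_on (by positivity)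
    ((continuous_inv_sqrt_sq_add_sq hr.1.ne').intervalIntegrable _ _)
    ((continuous_inv_sqrt_sin_sq_add_mul_cos_sq hr.1.ne').intervalIntegrable _ _) fun θ hθ => ?_
  exact inv_anti₀ (Real.sqrt_pos.2 (sin_sq_add_mul_cos_sq_pos hr.1.ne' θ))
    (sqrt_sin_sq_add_mul_cos_sq_le hθ.1 r (by linarith [hθ.2, Real.pi_pos]))

lemma ellK_sqrt_one_sub_sq_le_arsinh_add (hr : r ∈ Ioo (0 : ℝ) 1) :
    ellK √(1 - r ^ 2) ≤ Real.arsinh (π / 2 / r) + π / 2 := by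
  have hcont := continuous_inv_sqrt_sq_add_sq hr.1.ne'
  calc ellK √(1 - r ^ 2)
      = ∫ θ in (0 : ℝ)..(π / 2), (√(Real.sin θ ^ 2 + r ^ 2 * Real.cos θ ^ 2))⁻¹ :=
        ellK_sqrt_one_sub_sq_eq_integral hr
    _ ≤ ∫ θ in (0 : ℝ)..(π / 2), ((√(θ ^ 2 + r ^ 2))⁻¹ + 1) :=
        intervalIntegral.integral_mono_on (by positivity)
          ((continuous_inv_sqrt_sin_sq_add_mul_cos_sq hr.1.ne').intervalIntegrable _ _)
          ((hcont.add continuous_const).intervalIntegrable _ _)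
          fun θ hθ => inv_sqrt_sin_sq_add_mul_cos_sq_le hr.1.ne' hθ
    _ = Real.arsinh (π / 2 / r) + π / 2 := by
        rw [intervalIntegral.integral_add (hcont.intervalIntegrable _ _) (by simp),
          integral_inv_sqrt_sq_add_sq hr.1]
        simp

end ComplementaryModulus

section GrotzschModulus

variable {r : ℝ}

lemma mu_pos (hr : r ∈ Ioo (0 : ℝ) 1) : 0 < mu r := by
  have hK := ellK_pos (sq_lt_one_of_mem_Ioo hr)
  have hK' := ellK_pos (sq_lt_one_of_mem_Ioo (sqrt_one_sub_sq_mem_Ioo hr))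
  unfold mu
  positivity

lemma mu_sqrt_one_sub_sq (hr : r ∈ Ioo (0 : ℝ) 1) : mu √(1 - r ^ 2) = π ^ 2 / 4 / mu r := by
  have hK := ellK_pos (sq_lt_one_of_mem_Ioo hr)
  rw [mu, mu, sqrt_one_sub_sq_sq hr, sub_sub_cancel, Real.sqrt_sq hr.1.le]
  field_simp
  norm_num

lemma sqrt_one_sub_landen_sq {s : ℝ} (hs : s ^ 2 < 1) :
    √(1 - landen s ^ 2) = (1 - s ^ 2) / (1 + s ^ 2) := by
  rw [one_sub_landen_sq, Real.sqrt_sq (by positivity)]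

/-- This is `ellK_landen` with the complementary modulus `√(1 - landen s ^ 2)` in place of
`s ^ 2`. -/
lemma ellK_sqrt_one_sub_sq_sq {s : ℝ} (hs : s ∈ Ioo (0 : ℝ) 1) :
    ellK √(1 - (s ^ 2) ^ 2) = 2 / (1 + s ^ 2) * ellK √(1 - landen s ^ 2) := by
  have hs2 := sq_lt_one_of_mem_Ioo hs
  set y := √(1 - landen s ^ 2)
  have hyeq : y = (1 - s ^ 2) / (1 + s ^ 2) := sqrt_one_sub_landen_sq hs2
  have hymem : y ∈ Ioo (0 : ℝ) 1 := sqrt_one_sub_sq_mem_Ioo (landen_mem_Ioo hs)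
  have hsqrt : √y ^ 2 = y := Real.sq_sqrt hymem.1.le
  have hlanden : landen √y = √(1 - (s ^ 2) ^ 2) := by
    rw [← Real.sqrt_sq (landen_pos (Real.sqrt_pos.2 hymem.1)).le, landen, div_pow, mul_pow, hsqrt,
      hyeq]
    congr 1
    field_simp
    ring
  have hgauss := ellK_landen (s := √y) (by rw [hsqrt]; exact hymem.2)
  rw [hlanden, hsqrt] at hgauss
  rw [hgauss, hyeq]
  field_simp
  ring

lemma mu_sq {s : ℝ} (hs : s ∈ Ioo (0 : ℝ) 1) : mu (s ^ 2) = 2 * mu (landen s) := by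
  have hs2 := sq_lt_one_of_mem_Ioo hs
  rw [mu, mu, ellK_landen hs2, ellK_sqrt_one_sub_sq_sq hs]
  field_simp

lemma mu_one_sub_div_one_add (hr : r ∈ Ioo (0 : ℝ) 1) :
    mu ((1 - r) / (1 + r)) = π ^ 2 / 2 / mu r := by
  have hs : √r ∈ Ioo (0 : ℝ) 1 :=
    ⟨Real.sqrt_pos.2 hr.1, (Real.sqrt_lt' one_pos).2 (by simpa using hr.2)⟩
  have hsqrt : √r ^ 2 = r := Real.sq_sqrt hr.1.le
  have hcompl := mu_sqrt_one_sub_sq (landen_mem_Ioo hs)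
  have hdouble := mu_sq hs
  rw [sqrt_one_sub_landen_sq (sq_lt_one_of_mem_Ioo hs), hsqrt] at hcompl
  rw [hsqrt] at hdouble
  rw [hcompl, hdouble]
  ring

lemma arsinh_le_log_one_add_two_mul {x : ℝ} (hx : 0 ≤ x) :
    Real.arsinh x ≤ Real.log (1 + 2 * x) := by
  have hsqrt : √(1 + x ^ 2) ≤ 1 + x := Real.sqrt_le_iff.2 ⟨by positivity, by nlinarith⟩
  exact Real.log_le_log (by positivity) (by linarith)

lemma log_le_arsinh {x : ℝ} (hx : 0 < x) : Real.log x ≤ Real.arsinh x :=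
  Real.log_le_log hx (le_add_of_nonneg_right (Real.sqrt_nonneg _))

lemma mu_le_neg_log_add (hr : r ∈ Ioo (0 : ℝ) 1) :
    mu r ≤ -Real.log r + (Real.log 5 + π / 2) := by
  have hK := pi_div_two_le_ellK (sq_lt_one_of_mem_Ioo hr)
  have hK' := ellK_pos (sq_lt_one_of_mem_Ioo (sqrt_one_sub_sq_mem_Ioo hr))
  have hr0 := hr.1
  have hlin : 1 + 2 * (π / 2 / r) ≤ 5 / r := by
    rw [le_div_iff₀ hr0, add_mul, mul_assoc, div_mul_cancel₀ _ hr0.ne']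
    linarith [hr.2, Real.pi_lt_four]
  have hlog : Real.arsinh (π / 2 / r) ≤ Real.log 5 - Real.log r := by
    rw [← Real.log_div (by norm_num) hr0.ne']
    exact (arsinh_le_log_one_add_two_mul (by positivity)).trans
      (Real.log_le_log (by positivity) hlin)
  calc mu r ≤ ellK √(1 - r ^ 2) := by
        rw [mu, div_le_iff₀ (Real.pi_div_two_pos.trans_le hK), mul_comm]
        gcongr
    _ ≤ Real.arsinh (π / 2 / r) + π / 2 := ellK_sqrt_one_sub_sq_le_arsinh_add hr
    _ ≤ -Real.log r + (Real.log 5 + π / 2) := by linarith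

lemma one_sub_sqrt_one_sub_sq_mul_neg_log_le_one (hr : r ∈ Ioo (0 : ℝ) 1) :
    (1 - √(1 - r ^ 2)) * -Real.log r ≤ 1 := by
  have hr0 := hr.1
  have hr' := sqrt_one_sub_sq_mem_Ioo hr
  have hlog_pos : 0 < -Real.log r := neg_pos.2 (Real.log_neg hr0 hr.2)
  have hsqrt : 1 - √(1 - r ^ 2) ≤ r ^ 2 := by
    linarith [sqrt_one_sub_sq_sq hr, pow_le_of_le_one hr'.1.le hr'.2.le two_ne_zero]
  have hlog_le : -Real.log r ≤ r⁻¹ := by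
    linarith [Real.log_inv r, Real.log_le_sub_one_of_pos (inv_pos.2 hr0)]
  calc (1 - √(1 - r ^ 2)) * -Real.log r ≤ r ^ 2 * r⁻¹ := by gcongr
    _ = r := by field_simp
    _ ≤ 1 := hr.2.le

lemma neg_log_sub_one_le_mu (hr : r ∈ Ioo (0 : ℝ) 1) : -Real.log r - 1 ≤ mu r := by
  have hr0 := hr.1
  have hr2 := sq_lt_one_of_mem_Ioo hr
  have hK := ellK_pos hr2
  have hK' := ellK_pos (sq_lt_one_of_mem_Ioo (sqrt_one_sub_sq_mem_Ioo hr))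
  have hlog : -Real.log r ≤ ellK √(1 - r ^ 2) :=
    calc -Real.log r = Real.log (1 / r) := by rw [one_div, Real.log_inv]
      _ ≤ Real.log (π / 2 / r) := by
        gcongr
        exact Real.one_le_pi_div_two
      _ ≤ Real.arsinh (π / 2 / r) := log_le_arsinh (by positivity)
      _ ≤ ellK √(1 - r ^ 2) := arsinh_le_ellK_sqrt_one_sub_sq hr
  calc -Real.log r - 1 ≤ √(1 - r ^ 2) * -Real.log r := by
        linarith [one_sub_sqrt_one_sub_sq_mul_neg_log_le_one hr]
    _ = π / 2 * -Real.log r / (π / 2 / √(1 - r ^ 2)) := by field_simp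
    _ ≤ π / 2 * ellK √(1 - r ^ 2) / ellK r :=
        div_le_div₀ (by positivity) (by gcongr) hK (ellK_le hr2)

lemma continuousOn_mu : ContinuousOn mu (Ioo 0 1) := by
  unfold mu
  refine ContinuousOn.div (continuousOn_const.mul ?_) ?_ fun r hr =>
    (ellK_pos (sq_lt_one_of_mem_Ioo hr)).ne'
  · exact continuousOn_ellK.comp (by fun_prop) fun r hr =>
      sq_lt_one_of_mem_Ioo (sqrt_one_sub_sq_mem_Ioo hr)
  · exact continuousOn_ellK.mono fun r hr => sq_lt_one_of_mem_Ioo hr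

lemma exists_le_mu (M : ℝ) : ∃ r ∈ Ioo (0 : ℝ) 1, M ≤ mu r := by
  have hr : Real.exp (-(|M| + 1)) ∈ Ioo (0 : ℝ) 1 :=
    ⟨Real.exp_pos _, Real.exp_lt_one_iff.mpr (by linarith [abs_nonneg M])⟩
  have hle := neg_log_sub_one_le_mu hr
  rw [Real.log_exp] at hle
  exact ⟨_, hr, by linarith [le_abs_self M]⟩

lemma surjOn_mu : SurjOn mu (Ioo 0 1) (Ioi 0) := by
  intro M (hM : 0 < M)
  obtain ⟨a, ha, hMa⟩ := exists_le_mu M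
  obtain ⟨b, hb, hMb⟩ := exists_le_mu (π ^ 2 / 4 / M)
  have hsmall : mu √(1 - b ^ 2) ≤ M := by
    rw [mu_sqrt_one_sub_sq hb]
    exact (div_le_comm₀ (mu_pos hb) hM).2 hMb
  exact isPreconnected_Ioo.intermediate_value (sqrt_one_sub_sq_mem_Ioo hb) ha continuousOn_mu
    ⟨hsmall, hMa⟩

end GrotzschModulus

section NomeBounds

lemma mu_lt_log {k : ℝ} (hk : k ∈ Ioo (0 : ℝ) 1) : mu k < Real.log 4 - Real.log k := by
  suffices 0 < Real.log 4 - Real.log k - mu k from sub_pos.1 this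
  refine pos_of_forall_exists_lt_mul (S := Ioo 0 1) (F := fun k => Real.log 4 - Real.log k - mu k)
    one_lt_two ⟨Real.log 4 - (Real.log 5 + π / 2), ?_⟩ (fun k hk => ?_) hk
  · rintro _ ⟨k, hk, rfl⟩
    linarith [mu_le_neg_log_add hk]
  · obtain ⟨s, hs, rfl⟩ := surjOn_landen hk
    have hs0 := hs.1
    refine ⟨s ^ 2, ⟨by positivity, sq_lt_one_of_mem_Ioo hs⟩, ?_⟩
    have hlog : 2 * Real.log (landen s) < Real.log 4 + Real.log (s ^ 2) := by
      have hlt := Real.log_lt_log (landen_pos hs0) (landen_lt_two_mul hs0)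
      rw [Real.log_mul two_ne_zero hs0.ne'] at hlt
      rw [show (4 : ℝ) = 2 ^ 2 by norm_num, Real.log_pow, Real.log_pow]
      push_cast
      linarith
    linarith [mu_sq hs]

lemma neg_log_lt_mu_landen_landen {b : ℝ} (hb : b ∈ Ioo (0 : ℝ) 1) :
    -Real.log b < mu (landen (landen b)) := by
  suffices 0 < mu (landen (landen b)) + Real.log b by linarith
  refine pos_of_forall_exists_lt_mul (S := Ioo 0 1)
    (F := fun b => mu (landen (landen b)) + Real.log b)
    one_lt_two ⟨-1 - Real.log 4, ?_⟩ (fun b hb => ?_) hb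
  · rintro _ ⟨b, hb, rfl⟩
    have hc := landen_mem_Ioo (landen_mem_Ioo hb)
    have hle : landen (landen b) ≤ 4 * b := by
      linarith [landen_lt_two_mul (landen_pos hb.1), landen_lt_two_mul hb.1]
    have hlog := Real.log_le_log hc.1 hle
    rw [Real.log_mul four_ne_zero hb.1.ne'] at hlog
    linarith [neg_log_sub_one_le_mu hc]
  · have hmem := landen_mem_Ioo hb
    obtain ⟨t, ht, htb⟩ := surjOn_landen ⟨pow_pos hmem.1 2, sq_lt_one_of_mem_Ioo hmem⟩
    obtain ⟨d, hd, rfl⟩ := surjOn_landen ht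
    have hb2 : b ^ 2 ∈ Ioo (0 : ℝ) 1 := ⟨pow_pos hb.1 2, sq_lt_one_of_mem_Ioo hb⟩
    have hdb : d < b ^ 2 := by
      have hlt := landen_sq_lt_landen_landen_sq hb
      rwa [← htb, landen_landen_lt_landen_landen_iff hd hb2] at hlt
    refine ⟨d, hd, ?_⟩
    have hlog := Real.log_lt_log hd.1 hdb
    rw [Real.log_pow, Nat.cast_ofNat] at hlog
    rw [htb, mu_sq hmem]
    linarith

lemma landen_landen_exp_neg_mu_lt {c : ℝ} (hc : c ∈ Ioo (0 : ℝ) 1) :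
    landen (landen (Real.exp (-mu c))) < c := by
  obtain ⟨t, ht, rfl⟩ := surjOn_landen hc
  obtain ⟨b, hb, rfl⟩ := surjOn_landen ht
  have hq : Real.exp (-mu (landen (landen b))) ∈ Ioo (0 : ℝ) 1 :=
    ⟨Real.exp_pos _, Real.exp_lt_one_iff.mpr (neg_neg_iff_pos.2 (mu_pos hc))⟩
  rw [landen_landen_lt_landen_landen_iff hq hb, ← Real.lt_log_iff_exp_lt hb.1]
  exact neg_lt.1 (neg_log_lt_mu_landen_landen hb)

lemma lt_landen_two_mul_exp_neg_mu {c : ℝ} (hc : c ∈ Ioo (0 : ℝ) 1) (hmu : Real.log 2 ≤ mu c) :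
    c < landen (2 * Real.exp (-mu c)) := by
  obtain ⟨t, ht, rfl⟩ := surjOn_landen hc
  have ht0 := ht.1
  have hlog := mu_lt_log (k := t ^ 2) ⟨by positivity, sq_lt_one_of_mem_Ioo ht⟩
  rw [mu_sq ht, Real.log_pow, show (4 : ℝ) = 2 ^ 2 by norm_num, Real.log_pow] at hlog
  push_cast at hlog
  have hlt : t < 2 * Real.exp (-mu (landen t)) := by
    rw [← Real.log_lt_log_iff ht0 (by positivity), Real.log_mul two_ne_zero (Real.exp_ne_zero _),
      Real.log_exp]
    linarith
  have hle : 2 * Real.exp (-mu (landen t)) ≤ 1 := by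
    rw [← Real.log_nonpos_iff (by positivity), Real.log_mul two_ne_zero (Real.exp_ne_zero _),
      Real.log_exp]
    linarith
  exact strictMonoOn_landen ⟨ht0.le, ht.2.le⟩ ⟨by positivity, hle⟩ hlt

end NomeBounds

lemma exists_mu_eq_and_lam_eq {lam : ℝ → ℝ}
    (hlam : ∀ K : ℝ, 0 < K → ∀ r ∈ Ioo (0 : ℝ) 1,
      mu r = π / (2 * K) → lam K = r ^ 2 / (1 - r ^ 2)) {K : ℝ} (hK : 0 < K) :
    ∃ c ∈ Ioo (0 : ℝ) 1, mu c = π * K ∧ lam K = ((landen c)⁻¹ - 1) / 2 := by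
  obtain ⟨c, hc, hmu⟩ := surjOn_mu (mul_pos Real.pi_pos hK)
  have hc0 := hc.1
  have hc1 : 0 < 1 - c := sub_pos.2 hc.2
  have hr : (1 - c) / (1 + c) ∈ Ioo (0 : ℝ) 1 :=
    ⟨by positivity, (div_lt_one (by positivity)).2 (by linarith)⟩
  have hmur : mu ((1 - c) / (1 + c)) = π / (2 * K) := by
    rw [mu_one_sub_div_one_add hc, hmu]
    field_simp
  have hcompl : 1 - ((1 - c) / (1 + c)) ^ 2 = 4 * c / (1 + c) ^ 2 := by
    field_simp
    ring
  refine ⟨c, hc, hmu, ?_⟩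
  rw [hlam K hK _ hr hmur, hcompl, landen]
  field_simp
  ring

lemma inv_landen_landen_two_mul_sub_one_div_two {q : ℝ} (hq : 0 < q) :
    ((landen (landen (2 * q)))⁻¹ - 1) / 2 =
      1 / 16 * q⁻¹ - 1 / 2 + (1 / 4 + 1 / (4 * q ^ 2 + 1)) * q := by
  unfold landen
  field_simp
  ring

lemma inv_landen_landen_landen_sub_one_div_two {q : ℝ} (hq : 0 < q) :
    ((landen (landen (landen q)))⁻¹ - 1) / 2 =
      1 / 16 * q⁻¹ - 1 / 2 + 1 / 16 * (1 + 4 * (5 * q ^ 4 + 14 * q ^ 2 + 5) /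
        (q ^ 6 + 7 * q ^ 4 + 7 * q ^ 2 + 1)) * q := by
  have hfactor : q ^ 6 + 7 * q ^ 4 + 7 * q ^ 2 + 1 =
      (1 + q ^ 2) * ((1 + q ^ 2) ^ 2 + 4 * q ^ 2) := by ring
  rw [hfactor]
  unfold landen
  field_simp
  ring

lemma log_two_div_pi_le_one : Real.log 2 / π ≤ 1 :=
  (div_le_one Real.pi_pos).2 (by linarith [Real.log_two_lt_d9, Real.pi_gt_three])

theorem stmt_9_general {lam : ℝ → ℝ}
    (hlam : ∀ K : ℝ, 0 < K → ∀ r ∈ Ioo (0 : ℝ) 1,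
      mu r = π / (2 * K) → lam K = r ^ 2 / (1 - r ^ 2)) {K : ℝ} (hK : 0 < K) :
    (Real.log 2 / π ≤ K →
      1 / 16 * Real.exp (π * K) - 1 / 2 +
        (1 / 4 + 1 / (4 * Real.exp (-(2 * π * K)) + 1)) * Real.exp (-(π * K)) < lam K) ∧
    lam K < 1 / 16 * Real.exp (π * K) - 1 / 2 +
      (1 / 16 * (1 + 4 * (5 * Real.exp (-(4 * π * K)) + 14 * Real.exp (-(2 * π * K)) + 5) /
        (Real.exp (-(6 * π * K)) + 7 * Real.exp (-(4 * π * K)) +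
          7 * Real.exp (-(2 * π * K)) + 1))) * Real.exp (-(π * K)) := by
  obtain ⟨c, hc, hmu, hlamK⟩ := exists_mu_eq_and_lam_eq hlam hK
  have hexp (n : ℕ) : Real.exp (-(n * π * K)) = Real.exp (-(π * K)) ^ n := by
    rw [← Real.exp_nat_mul]
    ring_nf
  have hq : 0 < Real.exp (-(π * K)) := Real.exp_pos _
  have hinv : Real.exp (π * K) = (Real.exp (-(π * K)))⁻¹ := by rw [Real.exp_neg, inv_inv]
  have h2 := hexp 2
  have h4 := hexp 4
  have h6 := hexp 6
  push_cast at h2 h4 h6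
  rw [h2, h4, h6, hinv, ← inv_landen_landen_two_mul_sub_one_div_two hq,
    ← inv_landen_landen_landen_sub_one_div_two hq, hlamK, ← hmu]
  constructor
  · intro hlog
    rw [div_le_iff₀' Real.pi_pos, ← hmu] at hlog
    have hlt := lt_landen_two_mul_exp_neg_mu hc hlog
    have hpos := landen_pos hc.1
    have hlanden := strictMonoOn_landen (Ioo_subset_Icc_self hc)
      ⟨hc.1.le.trans hlt.le, landen_le_one _⟩ hlt
    gcongr
  · have hlt := landen_landen_exp_neg_mu_lt hc
    have hpos := landen_pos (landen_pos (landen_pos (Real.exp_pos (-mu c))))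
    have hlanden := strictMonoOn_landen
      ⟨(landen_pos (landen_pos (Real.exp_pos _))).le, landen_le_one _⟩ (Ioo_subset_Icc_self hc) hlt
    gcongr

theorem stmt_9 (lam : ℝ → ℝ)
    (hlam : ∀ K : ℝ, 0 < K → ∀ r ∈ Set.Ioo (0:ℝ) 1,
      mu r = Real.pi / (2 * K) → lam K = r ^ 2 / (1 - r ^ 2)) :
    ∀ K : ℝ, 1 < K →
      1 / 16 * Real.exp (Real.pi * K) - 1 / 2 +
        (1 / 4 + 1 / (4 * Real.exp (-(2 * Real.pi * K)) + 1)) * Real.exp (-(Real.pi * K))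
        < lam K ∧
      lam K <
        1 / 16 * Real.exp (Real.pi * K) - 1 / 2 +
        (1 / 16 * (1 + 4 * (5 * Real.exp (-(4 * Real.pi * K)) + 14 * Real.exp (-(2 * Real.pi * K)) + 5) /
          (Real.exp (-(6 * Real.pi * K)) + 7 * Real.exp (-(4 * Real.pi * K)) +
            7 * Real.exp (-(2 * Real.pi * K)) + 1))) * Real.exp (-(Real.pi * K)) := by
  intro K hK
  exact (stmt_9_general hlam (zero_lt_one.trans hK)).imp_left fun h =>
    h (log_two_div_pi_le_one.trans hK.le)
end
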